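/- Fix n ≥ 6 and let H_n be the graph on [n] obtained from the anticycle on n vertices by removing the edges {n−2, n} and {1, n−1} and adding the edge {1, n}. Then I_{H_n}^s has linear quotients for s = 2 and for s = 3. -/

import Mathlib

open MvPolynomial

noncomputable section

/-- The edge ideal of a finite simple graph on vertex set `Fin n`
(vertex with index `v` corresponds to the vertex `v+1` of `[n]`). -/
def edgeIdeal (K : Type*) [Field K] {n : ℕ} (G : SimpleGraph (Fin n)) :
    Ideal (MvPolynomial (Fin n) K) :=
  Ideal.span {p | ∃ i j : Fin n, G.Adj i j ∧ p = X i * X j}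

/-- `d` is the exponent vector of a minimal monomial generator of `I`. -/
def IsMinGen {K : Type*} [Field K] {n : ℕ} (I : Ideal (MvPolynomial (Fin n) K))
    (d : Fin n →₀ ℕ) : Prop :=
  monomial d (1 : K) ∈ I ∧
    ∀ e : Fin n →₀ ℕ, e ≤ d → e ≠ d → monomial e (1 : K) ∉ I

/-- A list of exponent vectors `L = [d_1, …, d_r]` is a linear quotient ordering if
for every `i ≥ 2` the colon ideal `(x^{d_1}, …, x^{d_{i-1}}) : x^{d_i}` is generated
by a subset of the variables. -/
def IsLinQuotOrder (K : Type*) [Field K] {n : ℕ} (L : List (Fin n →₀ ℕ)) : Prop :=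
  ∀ i : Fin L.length, 0 < i.val →
    ∃ V : Set (Fin n),
      Submodule.colon
        (Ideal.span {m : MvPolynomial (Fin n) K |
          ∃ k : Fin L.length, k.val < i.val ∧ m = monomial (L.get k) 1})
        (Ideal.span {monomial (L.get i) (1 : K)}) =
      Ideal.span ((fun v : Fin n => (X v : MvPolynomial (Fin n) K)) '' V)

/-- A monomial ideal has linear quotients if it is principal or admits a
linear quotient ordering of its minimal monomial generators. -/
def HasLinearQuotients {K : Type*} [Field K] {n : ℕ}
    (I : Ideal (MvPolynomial (Fin n) K)) : Prop :=
  (∃ p, I = Ideal.span {p}) ∨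
    ∃ L : List (Fin n →₀ ℕ), L.Nodup ∧ (∀ d, d ∈ L ↔ IsMinGen I d) ∧ IsLinQuotOrder K L

/-- `lexLt d e` : the monomial `x^d` is lexicographically smaller than `x^e`
for the lexicographic order induced by `x_n > x_{n-1} > … > x_1`. -/
def lexLt {n : ℕ} (d e : Fin n →₀ ℕ) : Prop :=
  ∃ k : Fin n, d k < e k ∧ ∀ m : Fin n, k < m → d m = e m

/-- `L` lists the minimal monomial generators of `I` in decreasing lexicographic order. -/
def LexDecMinGenOrder {K : Type*} [Field K] {n : ℕ} (I : Ideal (MvPolynomial (Fin n) K))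
    (L : List (Fin n →₀ ℕ)) : Prop :=
  List.Pairwise (fun d e => lexLt e d) L ∧ ∀ d, d ∈ L ↔ IsMinGen I d

/-- The anticycle on `[m]` : `{i,j}` is an edge iff `i ≠ j` and `i - j ≢ ±1 (mod m)`. -/
def anticycle (m : ℕ) : SimpleGraph (Fin m) where
  Adj i j := i ≠ j ∧ (i.val + 1) % m ≠ j.val ∧ (j.val + 1) % m ≠ i.val
  symm := ⟨fun i j h => ⟨h.1.symm, h.2.2, h.2.1⟩⟩
  loopless := ⟨fun i h => h.1 rfl⟩

/-- The anticycle on `[m]` regarded as a graph on the vertex set `[n]`. -/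
def anticycleIn (n m : ℕ) : SimpleGraph (Fin n) where
  Adj i j := i ≠ j ∧ i.val < m ∧ j.val < m ∧ (i.val + 1) % m ≠ j.val ∧ (j.val + 1) % m ≠ i.val
  symm := ⟨fun i j h => ⟨h.1.symm, h.2.2.1, h.2.1, h.2.2.2.2, h.2.2.2.1⟩⟩
  loopless := ⟨fun i h => h.1 rfl⟩

/-- The star on `[n]` with edges `{i, n}` for `1 ≤ i ≤ n - 3`
(in the `0`-indexed picture: edges `{i, n-1}` for `i ≤ n - 4`). -/
def starF (n : ℕ) : SimpleGraph (Fin n) :=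
  SimpleGraph.fromRel (fun i j => i.val + 4 ≤ n ∧ j.val = n - 1)

/-- `AgreeOrder n s i j t` : the degree-`s` monomials with ascending (0-indexed)
index sequences `i` and `j` agree in order `t`. -/
def AgreeOrder (n s : ℕ) (i j : ℕ → Fin n) (t : ℕ) : Prop :=
  if t = 0 then j (s - 1) < i (s - 1)
  else (∀ l, s - t ≤ l → l ≤ s - 1 → i l = j l) ∧ i (s - t - 1) ≠ j (s - t - 1)

/-!
Number the vertices of `H_n` by `0, …, n - 1` and write `n = l + 6`. The maximal independent sets of
`H_n` are the pairs of consecutive vertices up to `{l + 2, l + 3}`, the pair `{0, l + 4}` and the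
triple `{l + 3, l + 4, l + 5}`; all are arcs of one circular order. A vector of degree `2s` with at
most `s` on each of them is a sum of `s` edges: list its units along the circle and pair the `t`-th
with the `(t + s)`-th. Generators of `I ^ s` are thus described by linear inequalities.

Linear quotients follow from an exchange property: if `u` precedes `v`, then some unit of `v` can be
moved to a coordinate where `v` is smaller than `u`, giving a generator that precedes `v`. The
lexicographic order has this property among the vectors not supported on `{0, l + 2, l + 3, l + 4}`.
Vectors supported there come last. A unit that leaves these four vertices always leads back to an
earlier generator, and inside them `s` times the edge `{0, l + 2}`, the vector with the fewest
moves, is put at the very end.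
-/

section LinearQuotients

variable {σ R : Type*} [CommSemiring R]

lemma span_monomial_pow (E : Set (σ →₀ ℕ)) (s : ℕ) :
    Ideal.span ((fun d => monomial d (1 : R)) '' E) ^ s =
      Ideal.span ((fun d => monomial d (1 : R)) ''
        {d | ∃ e : Fin s → σ →₀ ℕ, (∀ t, e t ∈ E) ∧ ∑ t, e t = d}) := by
  rw [Ideal.span, Submodule.span_pow]
  congr 1
  ext p
  simp only [Set.mem_pow, List.prod_ofFn]
  constructor
  · rintro ⟨f, rfl⟩
    choose e he hf using fun t => (f t).2
    exact ⟨_, ⟨e, he, rfl⟩, by simp only [monomial_sum_one, hf]⟩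
  · rintro ⟨_, ⟨e, he, rfl⟩, rfl⟩
    exact ⟨fun t => ⟨_, e t, he t, rfl⟩, by simp only [monomial_sum_one]⟩

lemma colon_span_monomial_eq_span_X {A : Set (σ →₀ ℕ)} {d : σ →₀ ℕ}
    (h : ∀ u ∈ A, ∃ a, d a < u a ∧ ∃ w ∈ A, w ≤ d + Finsupp.single a 1) :
    Submodule.colon (Ideal.span ((fun e => monomial e (1 : R)) '' A))
        (Ideal.span {monomial d (1 : R)}) =
      Ideal.span (X '' {a | ∃ w ∈ A, w ≤ d + Finsupp.single a 1}) := by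
  classical
  ext p
  simp only [Ideal.mem_colon_span_singleton, mem_ideal_span_monomial_image, mem_ideal_span_X_image,
    mem_support_iff, coeff_mul_monomial', mul_one, Set.mem_ofPred_eq]
  constructor
  · intro hp m hm
    obtain ⟨u, hu, hum⟩ := hp (m + d) (by simpa using hm)
    obtain ⟨a, hda, hw⟩ := h u hu
    have hua : u a ≤ m a + d a := hum a
    exact ⟨a, hw, by omega⟩
  · intro hp m hm
    obtain ⟨hdm, hm⟩ := ite_ne_right_iff.1 hm
    obtain ⟨a, ⟨w, hw, hwd⟩, ha⟩ := hp (m - d) hm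
    refine ⟨w, hw, hwd.trans ?_⟩
    have hsingle : Finsupp.single a 1 ≤ m - d :=
      Finsupp.single_le_iff.2 (Nat.one_le_iff_ne_zero.2 ha)
    calc d + Finsupp.single a 1 ≤ d + (m - d) := by gcongr
      _ = m := add_tsub_cancel_of_le hdm

lemma eq_of_le_of_degree_eq {d e : σ →₀ ℕ} (hle : d ≤ e) (hdeg : d.degree = e.degree) : d = e := by
  obtain ⟨c, rfl⟩ := exists_add_of_le hle
  have hc : c.degree = 0 := by simpa using hdeg
  rw [(Finsupp.degree_eq_zero_iff c).1 hc, add_zero]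

lemma isMinGen_span_monomial_iff {K : Type*} [Field K] {n t : ℕ} {F : Set (Fin n →₀ ℕ)}
    (hF : ∀ d ∈ F, d.degree = t) (d : Fin n →₀ ℕ) :
    IsMinGen (Ideal.span ((fun e => monomial e (1 : K)) '' F)) d ↔ d ∈ F := by
  have monomial_mem (e : Fin n →₀ ℕ) :
      monomial e (1 : K) ∈ Ideal.span ((fun e => monomial e (1 : K)) '' F) ↔ ∃ a ∈ F, a ≤ e := by
    classical
    simp [mem_ideal_span_monomial_image, support_monomial]
  simp only [IsMinGen, monomial_mem]
  constructor
  · rintro ⟨⟨a, ha, had⟩, hmin⟩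
    obtain rfl : a = d := by_contra fun hne => hmin a had hne ⟨a, ha, le_rfl⟩
    exact ha
  · intro hd
    refine ⟨⟨d, hd, le_rfl⟩, ?_⟩
    rintro e hed hne ⟨a, ha, hae⟩
    have had : a = d := eq_of_le_of_degree_eq (hae.trans hed) ((hF a ha).trans (hF d hd).symm)
    exact hne (hed.antisymm (had ▸ hae))

lemma exists_list_sorted_by {α β : Type*} [LinearOrder β] {κ : α → β} (hκ : Function.Injective κ)
    {F : Set α} (hF : F.Finite) : ∃ L : List α, L.Nodup ∧ (∀ d, d ∈ L ↔ d ∈ F) ∧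
      ∀ i j : Fin L.length, κ (L.get i) < κ (L.get j) ↔ i < j := by
  let _ : LinearOrder α := LinearOrder.lift' κ hκ
  refine ⟨hF.toFinset.sort, Finset.sort_nodup _ _, fun d => by simp, fun i j => ?_⟩
  exact (Finset.sortedLT_sort hF.toFinset).strictMono_get.lt_iff_lt

theorem hasLinearQuotients_of_exchange {K β : Type*} [Field K] [LinearOrder β] {n t : ℕ}
    {F : Set (Fin n →₀ ℕ)} (hF : ∀ d ∈ F, d.degree = t) {κ : (Fin n →₀ ℕ) → β}
    (hκ : Function.Injective κ)
    (hex : ∀ u ∈ F, ∀ v ∈ F, κ u < κ v →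
      ∃ a, v a < u a ∧ ∃ w ∈ F, κ w < κ v ∧ w ≤ v + Finsupp.single a 1) :
    HasLinearQuotients (Ideal.span ((fun d => monomial d (1 : K)) '' F)) := by
  have hfin : F.Finite := (Finsupp.finite_of_degree_eq t).subset hF
  obtain ⟨L, hnodup, hmem, hsorted⟩ := exists_list_sorted_by hκ hfin
  refine Or.inr ⟨L, hnodup, fun d => by rw [hmem, isMinGen_span_monomial_iff hF], fun i _ => ?_⟩
  have hset : {m : MvPolynomial (Fin n) K |
        ∃ k : Fin L.length, k.val < i.val ∧ m = monomial (L.get k) 1} =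
      (fun d => monomial d (1 : K)) '' {d | ∃ k < i, d = L.get k} := by
    ext m
    constructor
    · rintro ⟨k, hk, rfl⟩
      exact ⟨_, ⟨k, hk, rfl⟩, rfl⟩
    · rintro ⟨_, ⟨k, hk, rfl⟩, rfl⟩
      exact ⟨k, hk, rfl⟩
  rw [hset]
  refine ⟨_, colon_span_monomial_eq_span_X ?_⟩
  rintro _ ⟨k, hk, rfl⟩
  obtain ⟨a, ha, w, hw, hwv, hle⟩ := hex _ ((hmem _).1 (L.get_mem k)) _ ((hmem _).1 (L.get_mem i))
    ((hsorted k i).2 hk)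
  obtain ⟨j, rfl⟩ := List.mem_iff_get.1 ((hmem w).2 hw)
  exact ⟨a, ha, _, ⟨j, (hsorted j i).1 hwv, rfl⟩, hle⟩

end LinearQuotients

section AntipodalPairing

variable {α β : Type*}

lemma exists_sum_single_eq {N : ℕ} {d : α →₀ ℕ} (hd : d.degree = N) :
    ∃ m : Fin N → α, ∑ t, Finsupp.single (m t) 1 = d := by
  classical
  obtain ⟨L, hL⟩ := Quot.exists_rep (Finsupp.toMultiset d)
  replace hL : (L : Multiset α) = Finsupp.toMultiset d := hL
  obtain rfl : L.length = N := by
    rw [← hd, ← Multiset.coe_card, hL]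
    exact Finsupp.card_toMultiset d
  refine ⟨L.get, (Finsupp.orderIsoMultiset (ι := α)).injective ?_⟩
  simp only [Finsupp.coe_orderIsoMultiset, map_sum, Finsupp.toMultiset_single, one_smul, ← hL]
  calc ∑ t, {L.get t} = (L.map fun a => ({a} : Multiset α)).sum :=
        Fin.sum_univ_fun_getElem L fun a => ({a} : Multiset α)
    _ = L := by rw [← Multiset.sum_coe, ← Multiset.map_coe, Multiset.sum_map_singleton]

lemma exists_monotone_enumeration [LinearOrder β] (pos : α → β) {N : ℕ} {d : α →₀ ℕ}
    (hd : d.degree = N) :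
    ∃ m : Fin N → α, Monotone (pos ∘ m) ∧ ∑ t, Finsupp.single (m t) 1 = d := by
  obtain ⟨m, rfl⟩ := exists_sum_single_eq hd
  exact ⟨m ∘ Tuple.sort (pos ∘ m), Tuple.monotone_sort (pos ∘ m),
    Equiv.sum_comp (Tuple.sort (pos ∘ m)) fun t => Finsupp.single (m t) 1⟩

lemma exists_mem_notMem_of_sum_lt_card {ι : Type*} [Fintype ι] (m : ι → α) {C : Finset α}
    {T : Finset ι} (h : ∑ i ∈ C, (∑ t, Finsupp.single (m t) 1 : α →₀ ℕ) i < T.card) :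
    ∃ t ∈ T, m t ∉ C := by
  classical
  contrapose! h
  calc T.card = ∑ i ∈ C, {t ∈ T | m t = i}.card := Finset.card_eq_sum_card_fiberwise h
    _ ≤ ∑ i ∈ C, (∑ t, Finsupp.single (m t) 1 : α →₀ ℕ) i := by
        gcongr with i
        rw [Finsupp.finsetSum_apply, Finset.card_filter]
        simp only [Finsupp.single_apply]
        exact Finset.sum_le_univ_sum_of_nonneg fun t => by positivity

-- Sort the `2s` units of `d` by position and pair the `t`-th with the `(t + s)`-th: the `s + 1`
-- consecutive units between them, or outside them, cannot all lie in `C`.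
theorem exists_antipodal_pairing [LinearOrder β] (pos : α → β) {s : ℕ} {d : α →₀ ℕ}
    (hd : d.degree = s + s) :
    ∃ x y : Fin s → α, ∑ t, (Finsupp.single (x t) 1 + Finsupp.single (y t) 1) = d ∧
      ∀ t (C : Finset α), ∑ i ∈ C, d i ≤ s →
        (∃ i ∉ C, pos (x t) ≤ pos i ∧ pos i ≤ pos (y t)) ∧
        (∃ i ∉ C, pos i ≤ pos (x t) ∨ pos (y t) ≤ pos i) := by
  obtain ⟨m, hm, rfl⟩ := exists_monotone_enumeration pos hd
  refine ⟨fun t => m (t.castAdd s), fun t => m (t.natAdd s), ?_, fun t C hC => ⟨?_, ?_⟩⟩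
  · rw [Fin.sum_univ_add, Finset.sum_add_distrib]
  · have hcard : (Finset.Icc (t.castAdd s) (t.natAdd s)).card = s + 1 := by
      simp only [Fin.card_Icc, Fin.val_natAdd, Fin.val_castAdd]
      omega
    obtain ⟨r, hr, hrC⟩ := exists_mem_notMem_of_sum_lt_card m
      (hC.trans_lt (Nat.lt_of_succ_le hcard.ge))
    exact ⟨m r, hrC, (Finset.mem_Icc.1 hr).imp (@hm _ _) (@hm _ _)⟩
  · have hdisj : Disjoint (Finset.Iic (t.castAdd s)) (Finset.Ici (t.natAdd s)) := by
      simp only [Finset.disjoint_left, Finset.mem_Iic, Finset.mem_Ici, Fin.le_def,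
        Fin.val_natAdd, Fin.val_castAdd]
      omega
    have hcard : (Finset.Iic (t.castAdd s) ∪ Finset.Ici (t.natAdd s)).card = s + 1 := by
      rw [Finset.card_union_of_disjoint hdisj]
      simp only [Fin.card_Iic, Fin.card_Ici, Fin.val_natAdd, Fin.val_castAdd]
      omega
    obtain ⟨r, hr, hrC⟩ := exists_mem_notMem_of_sum_lt_card m
      (hC.trans_lt (Nat.lt_of_succ_le hcard.ge))
    rw [Finset.mem_union, Finset.mem_Iic, Finset.mem_Ici] at hr
    exact ⟨m r, hrC, hr.imp (@hm _ _) (@hm _ _)⟩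

end AntipodalPairing

section ExponentVectors

variable {l n s : ℕ}

/-- The pairs `i < j` of vertices joined by an edge of `H_n`, for `n = l + 6` and vertices numbered
`0, …, l + 5`. In the complement, `0, …, l + 4` form a cycle and `l + 5` is joined to `l + 3` and
`l + 4`. -/
def HEdge (l i j : ℕ) : Prop := i ≤ l + 2 ∧ i + 2 ≤ j ∧ ¬(i = 0 ∧ j = l + 4)

/-- The vector on `ℕ` that agrees with `d` below `n` and vanishes from `n` on. It lets the vertices
of `H_n` be written as the natural numbers `0, …, l + 5`. -/
def extendZero (d : Fin n →₀ ℕ) : ℕ → ℕ := d.mapDomain Fin.val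

@[simp]
lemma extendZero_val (d : Fin n →₀ ℕ) (i : Fin n) : extendZero d i = d i :=
  Finsupp.mapDomain_apply Fin.val_injective d i

lemma extendZero_of_lt (d : Fin n →₀ ℕ) {i : ℕ} (hi : i < n) : extendZero d i = d ⟨i, hi⟩ :=
  extendZero_val d ⟨i, hi⟩

lemma extendZero_of_le (d : Fin n →₀ ℕ) {i : ℕ} (hi : n ≤ i) : extendZero d i = 0 :=
  Finsupp.mapDomain_of_notMem_range d i (by rw [Fin.range_val]; simpa using hi)

lemma exists_extendZero_eq {f : ℕ → ℕ} (hf : ∀ i, n ≤ i → f i = 0) :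
    ∃ d : Fin n →₀ ℕ, extendZero d = f := by
  refine ⟨Finsupp.equivFunOnFinite.symm fun i => f i, funext fun i => ?_⟩
  obtain hi | hi := lt_or_ge i n
  · simp [extendZero_of_lt _ hi]
  · rw [extendZero_of_le _ hi, hf i hi]

lemma sum_range_extendZero (d : Fin n →₀ ℕ) : ∑ i ∈ Finset.range n, extendZero d i = d.degree := by
  simp [Finset.sum_range, Finsupp.degree_eq_sum]

lemma sum_le_sum_extendZero (d : Fin n →₀ ℕ) (C : Finset ℕ) :
    ∑ i with i.val ∈ C, d i ≤ ∑ k ∈ C, extendZero d k := by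
  calc ∑ i with i.val ∈ C, d i = ∑ k ∈ ({i | i.val ∈ C} : Finset (Fin n)).map Fin.valEmbedding,
        extendZero d k := by simp
    _ ≤ ∑ k ∈ C, extendZero d k := by
        refine Finset.sum_le_sum_of_subset fun k hk => ?_
        obtain ⟨i, hi, rfl⟩ := Finset.mem_map.1 hk
        exact (Finset.mem_filter.1 hi).2

lemma extendZero_zero : extendZero (0 : Fin n →₀ ℕ) = 0 := by
  simp [extendZero]

lemma extendZero_add (d e : Fin n →₀ ℕ) : extendZero (d + e) = extendZero d + extendZero e := by
  simp [extendZero, Finsupp.mapDomain_add]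

/-- The vectors that, as `exists_sum_edge_eq_iff_feasible` shows, are the exponent vectors of
products of `s` edges of `H_n`, `n = l + 6`: the degree is `2s`, and each maximal independent set of
`H_n` carries at most half of it. -/
structure Feasible (l s : ℕ) (f : ℕ → ℕ) : Prop where
  path : ∀ i ≤ l + 2, f i + f (i + 1) ≤ s
  wrap : f 0 + f (l + 4) ≤ s
  triangle : f (l + 3) + f (l + 4) + f (l + 5) ≤ s
  degree : ∑ i ∈ Finset.range (l + 6), f i = 2 * s

lemma feasible_zero : Feasible l 0 0 := by
  constructor <;> simp

lemma Feasible.add {t : ℕ} {f g : ℕ → ℕ} (hf : Feasible l s f) (hg : Feasible l t g) :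
    Feasible l (s + t) (f + g) where
  path i hi := by
    have := hf.path i hi
    have := hg.path i hi
    simp only [Pi.add_apply]
    omega
  wrap := by
    have := hf.wrap
    have := hg.wrap
    simp only [Pi.add_apply]
    omega
  triangle := by
    have := hf.triangle
    have := hg.triangle
    simp only [Pi.add_apply]
    omega
  degree := by
    simp only [Pi.add_apply, Finset.sum_add_distrib, hf.degree, hg.degree]
    ring

lemma feasible_edge {i j : Fin (l + 6)} (h : HEdge l i j) :
    Feasible l 1 (extendZero (Finsupp.single i 1 + Finsupp.single j 1)) := by
  have hdeg := sum_range_extendZero (Finsupp.single i 1 + Finsupp.single j 1)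
  have hval (k : ℕ) : extendZero (Finsupp.single i 1 + Finsupp.single j 1) k =
      (if i.val = k then 1 else 0) + if j.val = k then 1 else 0 := by
    simp [extendZero, Finsupp.mapDomain_add, Finsupp.mapDomain_single, Finsupp.single_apply]
  obtain ⟨hi, hij, hwrap⟩ := h
  refine ⟨fun k _ => ?_, ?_, ?_, by simpa using hdeg⟩
  all_goals
    simp only [hval]
    split_ifs <;> omega

lemma feasible_sum_edge {ι : Type*} (T : Finset ι) {e : ι → Fin (l + 6) →₀ ℕ}
    (he : ∀ t ∈ T, Feasible l 1 (extendZero (e t))) :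
    Feasible l T.card (extendZero (∑ t ∈ T, e t)) := by
  induction T using Finset.cons_induction with
  | empty => simpa [extendZero_zero] using feasible_zero
  | cons a T ha ih =>
    rw [Finset.sum_cons, Finset.card_cons, add_comm T.card, extendZero_add]
    exact (he a (Finset.mem_cons_self a T)).add (ih fun t ht => he t (Finset.mem_cons_of_mem ht))

/-- The position of a vertex in the circular order `0, …, l + 3, l + 5, l + 4`, in which every
maximal independent set of `H_n` is an arc. -/
def arcPos (l i : ℕ) : ℕ := if i = l + 4 then l + 5 else if i = l + 5 then l + 4 else i

lemma Feasible.exists_sum_edge_eq {d : Fin (l + 6) →₀ ℕ} (hd : Feasible l s (extendZero d)) :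
    ∃ x y : Fin s → Fin (l + 6), (∀ t, HEdge l (x t) (y t)) ∧
      ∑ t, (Finsupp.single (x t) 1 + Finsupp.single (y t) 1) = d := by
  have hdeg : d.degree = s + s := by rw [← sum_range_extendZero, hd.degree, two_mul]
  obtain ⟨x, y, hsum, hsep⟩ := exists_antipodal_pairing (fun i : Fin (l + 6) => arcPos l i) hdeg
  refine ⟨x, y, fun t => by_contra fun hedge => ?_, hsum⟩
  replace hsep (C : Finset ℕ) (hC : ∑ k ∈ C, extendZero d k ≤ s) :
      (∃ k ∉ C, arcPos l (x t) ≤ arcPos l k ∧ arcPos l k ≤ arcPos l (y t)) ∧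
      (∃ k < l + 6, k ∉ C ∧ (arcPos l k ≤ arcPos l (x t) ∨ arcPos l (y t) ≤ arcPos l k)) := by
    obtain ⟨⟨p, hp, hxpy⟩, q, hq, hqxy⟩ :=
      hsep t {i | i.val ∈ C} ((sum_le_sum_extendZero d C).trans hC)
    exact ⟨⟨p, by simpa using hp, hxpy⟩, q, q.isLt, by simpa using hq, hqxy⟩
  have hpath (c : ℕ) (hc : c ≤ l + 2) :
      ∃ k ∉ ({c, c + 1} : Finset ℕ), arcPos l (x t) ≤ arcPos l k ∧ arcPos l k ≤ arcPos l (y t) :=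
    (hsep {c, c + 1} (by simpa using hd.path c hc)).1
  obtain ⟨p, hp, hxp, hpy⟩ :=
    (hsep {l + 3, l + 4, l + 5} (by simpa [add_assoc] using hd.triangle)).1
  obtain ⟨q, hql, hq, hqxy⟩ := (hsep {0, l + 4} (by simpa using hd.wrap)).2
  have hx : x t < l + 3 := by grind [arcPos]
  obtain ⟨r, hr, hxr, hry⟩ := hpath (x t) (by omega)
  grind [arcPos, HEdge]

theorem exists_sum_edge_eq_iff_feasible {d : Fin (l + 6) →₀ ℕ} :
    (∃ e : Fin s → Fin (l + 6) →₀ ℕ, (∀ t, ∃ i j : Fin (l + 6), HEdge l i j ∧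
      e t = Finsupp.single i 1 + Finsupp.single j 1) ∧ ∑ t, e t = d) ↔
      Feasible l s (extendZero d) := by
  constructor
  · rintro ⟨e, he, rfl⟩
    have hsum := feasible_sum_edge (l := l) Finset.univ (e := e) fun t _ => by
      obtain ⟨i, j, hij, h⟩ := he t
      exact h ▸ feasible_edge hij
    simpa using hsum
  · intro hd
    obtain ⟨x, y, hxy, hsum⟩ := hd.exists_sum_edge_eq
    exact ⟨_, fun t => ⟨x t, y t, hxy t, rfl⟩, hsum⟩

end ExponentVectors

section Exchange

variable {l s : ℕ} {u v : ℕ → ℕ}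

/-- The vector obtained from `v` by moving one unit from `b` to `a`, for `0 < v b`. -/
def moveUnit (v : ℕ → ℕ) (a b i : ℕ) : ℕ :=
  v i + (if i = a then 1 else 0) - (if i = b then 1 else 0)

lemma sum_moveUnit_add {a b : ℕ} (hb : 0 < v b) (T : Finset ℕ) :
    ∑ i ∈ T, moveUnit v a b i + (if b ∈ T then 1 else 0) =
      ∑ i ∈ T, v i + if a ∈ T then 1 else 0 := by
  simp only [← Finset.sum_ite_eq' T _ fun _ => 1, ← Finset.sum_add_distrib]
  refine Finset.sum_congr rfl fun i _ => ?_
  grind [moveUnit]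

lemma feasible_moveUnit (hv : Feasible l s v) {a b : ℕ} (ha : a < l + 6) (hb : b < l + 6)
    (hpos : 0 < v b)
    (hpath : ∀ i ≤ l + 2, i = a ∨ i + 1 = a → i = b ∨ i + 1 = b ∨ v i + v (i + 1) < s)
    (hwrap : a = 0 ∨ a = l + 4 → b = 0 ∨ b = l + 4 ∨ v 0 + v (l + 4) < s)
    (htriangle : l + 3 ≤ a → l + 3 ≤ b ∨ v (l + 3) + v (l + 4) + v (l + 5) < s) :
    Feasible l s (moveUnit v a b) where
  path i hi := by grind [moveUnit, hv.path i hi, hpath i hi]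
  wrap := by grind [moveUnit, hv.wrap]
  triangle := by
    have hsum : moveUnit v a b (l + 3) + moveUnit v a b (l + 4) + moveUnit v a b (l + 5) +
        (if b = l + 3 ∨ b = l + 4 ∨ b = l + 5 then 1 else 0) = v (l + 3) + v (l + 4) + v (l + 5) +
        if a = l + 3 ∨ a = l + 4 ∨ a = l + 5 then 1 else 0 := by
      simpa [add_assoc] using sum_moveUnit_add (a := a) hpos {l + 3, l + 4, l + 5}
    have hle := hv.triangle
    split_ifs at hsum <;> omega
  degree := by
    have hsum := sum_moveUnit_add (a := a) hpos (Finset.range (l + 6))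
    simpa [ha, hb, hv.degree] using hsum

/-- The degree of `f` on the core `{0, l + 2, l + 3, l + 4}` of `H_n`. The edges of `H_n` inside the
core form the path `l + 3, 0, l + 2, l + 4`. -/
def coreMass (l : ℕ) (f : ℕ → ℕ) : ℕ := f 0 + f (l + 2) + f (l + 3) + f (l + 4)

lemma coreMass_moveUnit_add {a b : ℕ} (hb : 0 < v b) :
    coreMass l (moveUnit v a b) + (if b = 0 ∨ b = l + 2 ∨ b = l + 3 ∨ b = l + 4 then 1 else 0) =
      coreMass l v + if a = 0 ∨ a = l + 2 ∨ a = l + 3 ∨ a = l + 4 then 1 else 0 := by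
  simpa [coreMass, add_assoc] using sum_moveUnit_add (a := a) hb {0, l + 2, l + 3, l + 4}

/-- The degree of `f` on the vertices `1, …, l + 1`. -/
def pathMass (l : ℕ) (f : ℕ → ℕ) : ℕ := ∑ i ∈ Finset.Icc 1 (l + 1), f i

lemma Feasible.coreMass_add (hv : Feasible l s v) :
    coreMass l v + pathMass l v + v (l + 5) = 2 * s := by
  have hpath : ∑ i ∈ Finset.range (l + 1), v (i + 1) = pathMass l v := by
    rw [pathMass, Finset.range_eq_Ico, Finset.sum_Ico_add' v 0 (l + 1) 1]
    rfl
  rw [← hv.degree, coreMass, ← hpath]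
  simp only [Finset.sum_range_succ _ (l + 5), Finset.sum_range_succ _ (l + 4),
    Finset.sum_range_succ _ (l + 3), Finset.sum_range_succ _ (l + 2), Finset.sum_range_succ']
  ring

lemma le_pathMass {i : ℕ} (h1 : 1 ≤ i) (h2 : i ≤ l + 1) : v i ≤ pathMass l v :=
  Finset.single_le_sum (f := v) (fun _ _ => Nat.zero_le _) (Finset.mem_Icc.2 ⟨h1, h2⟩)

lemma add_le_pathMass {i j : ℕ} (hi : 1 ≤ i) (hij : i < j) (hj : j ≤ l + 1) :
    v i + v j ≤ pathMass l v := by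
  rw [← Finset.sum_pair hij.ne]
  refine Finset.sum_le_sum_of_subset fun k hk => ?_
  simp only [Finset.mem_insert, Finset.mem_singleton, Finset.mem_Icc] at hk ⊢
  omega

lemma exists_lt_of_pathMass_lt (h : pathMass l v < pathMass l u) :
    ∃ a, 1 ≤ a ∧ a ≤ l + 1 ∧ v a < u a := by
  obtain ⟨a, ha, hlt⟩ := Finset.exists_lt_of_sum_lt h
  exact ⟨a, (Finset.mem_Icc.1 ha).1, (Finset.mem_Icc.1 ha).2, hlt⟩

lemma exists_pos_of_pathMass_pos (h : 0 < pathMass l u) : ∃ a, 1 ≤ a ∧ a ≤ l + 1 ∧ 0 < u a :=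
  exists_lt_of_pathMass_lt (v := 0) (by simpa [pathMass] using h)

/-- The primary sorting key: first the vectors not supported on the core, then those supported on
it by increasing value at `l + 3`, and at the very end the `s`-th power of the edge `{0, l + 2}`. -/
def coreRank (l s : ℕ) (f : ℕ → ℕ) : ℕ :=
  if coreMass l f < 2 * s then 0 else if f 0 = s ∧ f (l + 2) = s then s + 2 else f (l + 3) + 1

/-- The order on generators: by `coreRank`, and lexicographically decreasing from the last vertex
within each rank. -/
def Precedes (l s : ℕ) (u v : ℕ → ℕ) : Prop :=
  coreRank l s u < coreRank l s v ∨ coreRank l s u = coreRank l s v ∧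
    ∃ k < l + 6, v k < u k ∧ ∀ j, k < j → j < l + 6 → u j = v j

/-- Some unit of `v` can be moved to a coordinate at which `v` is smaller than `u`, such that the
result is feasible and precedes `v`. -/
def StepsToward (l s : ℕ) (u v : ℕ → ℕ) : Prop :=
  ∃ a b, a < l + 6 ∧ b < l + 6 ∧ v a < u a ∧ 0 < v b ∧ Feasible l s (moveUnit v a b) ∧
    Precedes l s (moveUnit v a b) v

lemma precedes_moveUnit {a b : ℕ} (ha : a < l + 6) (hba : b < a)
    (hrank : coreRank l s (moveUnit v a b) ≤ coreRank l s v) : Precedes l s (moveUnit v a b) v := by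
  refine hrank.lt_or_eq.imp_right fun heq => ⟨heq, a, ha, ?_, fun j hj _ => ?_⟩ <;> grind [moveUnit]

lemma StepsToward.of_slack (hv : Feasible l s v) (hout : coreMass l v < 2 * s) {a b : ℕ}
    (ha : a < l + 6) (hba : b < a) (hau : v a < u a) (hpos : 0 < v b)
    (hmass : (1 ≤ a ∧ a ≤ l + 1 ∨ a = l + 5) ∨ (b = 0 ∨ l + 2 ≤ b) ∨ coreMass l v + 1 < 2 * s)
    (hleft : ∀ i ≤ l + 2, i + 1 = a → b = i ∨ v i + v (i + 1) < s)
    (hright : a ≤ l + 2 → v a + v (a + 1) < s)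
    (hwrap : a = l + 4 → b = 0 ∨ v 0 + v (l + 4) < s)
    (htriangle : l + 3 ≤ a → l + 3 ≤ b ∨ v (l + 3) + v (l + 4) + v (l + 5) < s) :
    StepsToward l s u v := by
  have hout' : coreMass l (moveUnit v a b) < 2 * s := by
    have hmoved := coreMass_moveUnit_add (l := l) (a := a) hpos
    split_ifs at hmoved <;> omega
  refine ⟨a, b, ha, by omega, hau, hpos, feasible_moveUnit hv ha (by omega) hpos ?_ ?_ ?_,
    precedes_moveUnit ha hba (by simp [coreRank, hout'])⟩
  · rintro i hi (rfl | hia)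
    · exact Or.inr (Or.inr (hright hi))
    · grind
  · grind
  · exact htriangle

lemma Feasible.exists_lt_of_lt (hu : Feasible l s u) (hv : Feasible l s v) {k : ℕ} (hk : k < l + 6)
    (hlt : v k < u k) (heq : ∀ j, k < j → j < l + 6 → u j = v j) : ∃ b < k, u b < v b := by
  by_contra! hle
  refine (hv.degree.trans hu.degree.symm).not_lt (Finset.sum_lt_sum (fun j hj => ?_)
    ⟨k, Finset.mem_range.2 hk, hlt⟩)
  obtain hjk | rfl | hkj := lt_trichotomy j k
  · exact hle j hjk
  · exact hlt.le
  · exact (heq j hkj (Finset.mem_range.1 hj)).ge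

lemma stepsToward_of_lt_last (hu : Feasible l s u) (hv : Feasible l s v)
    (hout : coreMass l v < 2 * s) (hlt : v (l + 5) < u (l + 5)) : StepsToward l s u v := by
  obtain ⟨b₀, hb₀, hub₀⟩ := hu.exists_lt_of_lt hv (by omega) hlt (by omega)
  obtain ⟨b, hb, hpos, hb'⟩ : ∃ b < l + 5, 0 < v b ∧
      (l + 3 ≤ b ∨ v (l + 3) = 0 ∧ v (l + 4) = 0) := by
    by_cases h₄ : 0 < v (l + 4)
    · exact ⟨l + 4, by omega, h₄, by omega⟩
    by_cases h₃ : 0 < v (l + 3)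
    · exact ⟨l + 3, by omega, h₃, by omega⟩
    exact ⟨b₀, hb₀, by omega, by omega⟩
  have htri := hu.triangle
  exact .of_slack hv hout (by omega) hb hlt hpos (by omega) (by omega) (by omega) (by omega)
    (by omega)

lemma stepsToward_of_tight (hu : Feasible l s u) (hv : Feasible l s v)
    (hout : coreMass l v < 2 * s) (hlt : v (l + 4) < u (l + 4)) (hwrap : v 0 + v (l + 4) = s)
    (htriangle : v (l + 3) + v (l + 4) + v (l + 5) = s) : StepsToward l s u v := by
  have hu₀ := hu.wrap
  have hu₃ := hu.triangle
  have hudeg := hu.coreMass_add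
  have hvdeg := hv.coreMass_add
  simp only [coreMass] at hout hudeg hvdeg
  have hpath₁ : v (l + 1) ≤ pathMass l v := le_pathMass (by omega) le_rfl
  obtain h | h : pathMass l v < pathMass l u ∨ v (l + 2) < u (l + 2) := by omega
  · obtain ⟨a, ha₁, ha, hau⟩ := exists_lt_of_pathMass_lt h
    refine .of_slack (b := 0) hv hout (by omega) ha₁ hau (by omega) (by omega) ?_ ?_ (by omega)
      (by omega)
    · rintro i - rfl
      obtain rfl | hi := Nat.eq_zero_or_pos i
      · exact Or.inl rfl
      · have : v i + v (i + 1) ≤ pathMass l v := add_le_pathMass hi i.lt_succ_self ha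
        omega
    · intro _
      obtain rfl | hal := ha.eq_or_lt
      · change v (l + 1) + v (l + 2) < s
        omega
      · have : v a + v (a + 1) ≤ pathMass l v := add_le_pathMass ha₁ a.lt_succ_self hal
        omega
  · refine .of_slack (b := 0) hv hout (by omega) (by omega) h (by omega) (by omega) ?_ ?_
      (by omega) (by omega)
    · rintro i - hi
      obtain rfl : i = l + 1 := by omega
      change 0 = l + 1 ∨ v (l + 1) + v (l + 2) < s
      omega
    · intro _
      change v (l + 2) + v (l + 3) < s
      omega

lemma stepsToward_of_lt_add_four (hu : Feasible l s u) (hv : Feasible l s v)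
    (hout : coreMass l v < 2 * s) (hlt : v (l + 4) < u (l + 4)) (heq : u (l + 5) = v (l + 5)) :
    StepsToward l s u v := by
  have hu₀ := hu.wrap
  have hu₃ := hu.triangle
  by_cases hwrap : v 0 + v (l + 4) = s
  · by_cases htriangle : v (l + 3) + v (l + 4) + v (l + 5) = s
    · exact stepsToward_of_tight hu hv hout hlt hwrap htriangle
    · have hv₃ := hv.triangle
      exact .of_slack (b := 0) hv hout (by omega) (by omega) hlt (by omega) (by omega) (by omega)
        (by omega) (by omega) (by omega)
  have hv₀ := hv.wrap
  by_cases htriangle : v (l + 3) + v (l + 4) + v (l + 5) = s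
  · exact .of_slack (b := l + 3) hv hout (by omega) (by omega) hlt (by omega) (by omega) (by omega)
      (by omega) (by omega) (by omega)
  obtain ⟨b₀, hb₀, hub₀⟩ := hu.exists_lt_of_lt hv (by omega) hlt fun j _ _ => by
    obtain rfl : j = l + 5 := by omega
    exact heq
  obtain ⟨b, hb, hpos, hb'⟩ : ∃ b < l + 4, 0 < v b ∧
      ((b = 0 ∨ l + 2 ≤ b) ∨ coreMass l v + 1 < 2 * s) := by
    by_cases hmass : coreMass l v + 1 < 2 * s
    · exact ⟨b₀, hb₀, by omega, by omega⟩
    simp only [coreMass] at hmass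
    obtain h | h | h : 0 < v 0 ∨ 0 < v (l + 2) ∨ 0 < v (l + 3) := by omega
    exacts [⟨0, by omega, h, by omega⟩, ⟨l + 2, by omega, h, by omega⟩,
      ⟨l + 3, by omega, h, by omega⟩]
  have hv₃ := hv.triangle
  exact .of_slack hv hout (by omega) hb hlt hpos (by omega) (by omega) (by omega) (by omega)
    (by omega)

lemma stepsToward_of_lt_add_three (hu : Feasible l s u) (hv : Feasible l s v)
    (hout : coreMass l v < 2 * s) (hlt : v (l + 3) < u (l + 3))
    (heq : ∀ j, l + 3 < j → j < l + 6 → u j = v j) : StepsToward l s u v := by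
  have hv₂ : v (l + 2) + v (l + 3) ≤ s := hv.path (l + 2) le_rfl
  have htriangle : v (l + 3) + v (l + 4) + v (l + 5) < s := by
    have := hu.triangle
    rw [heq (l + 4) (by omega) (by omega), heq (l + 5) (by omega) (by omega)] at this
    omega
  obtain ⟨b₀, hb₀, hub₀⟩ := hu.exists_lt_of_lt hv (by omega) hlt heq
  obtain ⟨b, hb, hpos, hmass, hleft⟩ : ∃ b < l + 3, 0 < v b ∧
      ((b = 0 ∨ l + 2 ≤ b) ∨ coreMass l v + 1 < 2 * s) ∧
      (b = l + 2 ∨ v (l + 2) + v (l + 3) < s) := by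
    by_cases htight : v (l + 2) + v (l + 3) = s
    · exact ⟨l + 2, by omega, by omega, by omega, by omega⟩
    by_cases hmass : coreMass l v + 1 < 2 * s
    · exact ⟨b₀, hb₀, by omega, by omega, by omega⟩
    simp only [coreMass] at hmass
    obtain h | h : 0 < v 0 ∨ 0 < v (l + 2) := by omega
    exacts [⟨0, by omega, h, by omega, by omega⟩, ⟨l + 2, by omega, h, by omega, by omega⟩]
  refine .of_slack hv hout (by omega) hb hlt hpos (by omega) ?_ (by omega) (by omega) (by omega)
  rintro i - hi
  obtain rfl : i = l + 2 := by omega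
  exact hleft

lemma stepsToward_of_lt_add_two_of_tight (hs : 2 ≤ s) (hu : Feasible l s u) (hv : Feasible l s v)
    (huout : coreMass l u < 2 * s) (hout : coreMass l v < 2 * s) (hlt : v (l + 2) < u (l + 2))
    (heq : ∀ j, l + 2 < j → j < l + 6 → u j = v j) (htight : v (l + 1) + v (l + 2) = s) :
    StepsToward l s u v := by
  have hu₁ : u (l + 1) + u (l + 2) ≤ s := hu.path (l + 1) (by omega)
  have hu₂ : u (l + 2) + u (l + 3) ≤ s := hu.path (l + 2) le_rfl
  have h₃ := heq (l + 3) (by omega) (by omega)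
  by_cases hmass : coreMass l v + 1 < 2 * s
  · refine .of_slack (b := l + 1) hv hout (by omega) (by omega) hlt (by omega) (by omega)
      (by omega) (fun _ => ?_) (by omega) (by omega)
    change v (l + 2) + v (l + 3) < s
    omega
  have h₄ := heq (l + 4) (by omega) (by omega)
  have h₅ := heq (l + 5) (by omega) (by omega)
  have hudeg := hu.coreMass_add
  have hvdeg := hv.coreMass_add
  have hpath₁ : v (l + 1) ≤ pathMass l v := le_pathMass (by omega) le_rfl
  simp only [coreMass] at huout hout hudeg hvdeg hmass
  have hpath : pathMass l v = 1 := by omega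
  obtain ⟨a, ha₁, ha, hua⟩ := exists_pos_of_pathMass_pos (l := l) (u := u) (by omega)
  have hal : a ≠ l + 1 := by
    rintro rfl
    omega
  have hva : v a + v (l + 1) ≤ pathMass l v := add_le_pathMass ha₁ (by omega) le_rfl
  refine .of_slack (b := 0) hv hout (by omega) ha₁ (by omega) (by omega) (by omega) ?_ ?_
    (by omega) (by omega)
  · rintro i - rfl
    obtain rfl | hi := Nat.eq_zero_or_pos i
    · exact Or.inl rfl
    · have : v i + v (i + 1) ≤ pathMass l v := add_le_pathMass hi i.lt_succ_self ha
      omega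
  · intro _
    have : v a + v (a + 1) ≤ pathMass l v := add_le_pathMass ha₁ a.lt_succ_self (by omega)
    omega

lemma stepsToward_of_lt_add_two (hs : 2 ≤ s) (hu : Feasible l s u) (hv : Feasible l s v)
    (huout : coreMass l u < 2 * s) (hout : coreMass l v < 2 * s) (hlt : v (l + 2) < u (l + 2))
    (heq : ∀ j, l + 2 < j → j < l + 6 → u j = v j) : StepsToward l s u v := by
  have hv₁ : v (l + 1) + v (l + 2) ≤ s := hv.path (l + 1) (by omega)
  obtain htight | hslack := hv₁.eq_or_lt
  · exact stepsToward_of_lt_add_two_of_tight hs hu hv huout hout hlt heq htight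
  have hu₂ : u (l + 2) + u (l + 3) ≤ s := hu.path (l + 2) le_rfl
  have h₃ := heq (l + 3) (by omega) (by omega)
  have h₄ := heq (l + 4) (by omega) (by omega)
  obtain ⟨b₀, hb₀, hub₀⟩ := hu.exists_lt_of_lt hv (by omega) hlt heq
  obtain ⟨b, hb, hpos, hmass⟩ : ∃ b < l + 2, 0 < v b ∧ (b = 0 ∨ coreMass l v + 1 < 2 * s) := by
    by_cases hmass : coreMass l v + 1 < 2 * s
    · exact ⟨b₀, hb₀, by omega, Or.inr hmass⟩
    simp only [coreMass] at hmass huout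
    exact ⟨0, by omega, by omega, Or.inl rfl⟩
  refine .of_slack hv hout (by omega) hb hlt hpos (by omega) ?_ (fun _ => ?_) (by omega) (by omega)
  · rintro i - hi
    obtain rfl : i = l + 1 := by omega
    exact Or.inr hslack
  · change v (l + 2) + v (l + 3) < s
    omega

lemma stepsToward_of_lt_path (hu : Feasible l s u) (hv : Feasible l s v)
    (hout : coreMass l v < 2 * s) {k : ℕ} (hk : k ≤ l + 1) (hlt : v k < u k)
    (heq : ∀ j, k < j → j < l + 6 → u j = v j) : StepsToward l s u v := by
  obtain ⟨b₀, hb₀, hub₀⟩ := hu.exists_lt_of_lt hv (by omega) hlt heq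
  obtain ⟨i, rfl⟩ : ∃ i, k = i + 1 := ⟨k - 1, by omega⟩
  have hleft := hu.path i (by omega)
  have hright := hu.path (i + 1) (by omega)
  rw [heq (i + 1 + 1) (by omega) (by omega)] at hright
  obtain ⟨b, hb, hpos, hb'⟩ : ∃ b < i + 1, 0 < v b ∧ (b = i ∨ v i + v (i + 1) < s) := by
    by_cases htight : v i + v (i + 1) < s
    · exact ⟨b₀, hb₀, by omega, Or.inr htight⟩
    · exact ⟨i, by omega, by omega, Or.inl rfl⟩
  refine .of_slack hv hout (by omega) hb hlt hpos (by omega) ?_ (by omega) (by omega) (by omega)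
  rintro j - hj
  obtain rfl : j = i := by omega
  exact hb'

theorem stepsToward_of_outer (hs : 2 ≤ s) (hu : Feasible l s u) (hv : Feasible l s v)
    (huout : coreMass l u < 2 * s) (hout : coreMass l v < 2 * s) {k : ℕ} (hk : k < l + 6)
    (hlt : v k < u k) (heq : ∀ j, k < j → j < l + 6 → u j = v j) : StepsToward l s u v := by
  obtain hk | rfl | rfl | rfl | rfl :
    k ≤ l + 1 ∨ k = l + 2 ∨ k = l + 3 ∨ k = l + 4 ∨ k = l + 5 := by omega
  · exact stepsToward_of_lt_path hu hv hout hk hlt heq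
  · exact stepsToward_of_lt_add_two hs hu hv huout hout hlt heq
  · exact stepsToward_of_lt_add_three hu hv hout hlt heq
  · exact stepsToward_of_lt_add_four hu hv hout hlt (heq (l + 5) (by omega) (by omega))
  · exact stepsToward_of_lt_last hu hv hout hlt

lemma Feasible.sums_of_core (hv : Feasible l s v) (hcore : coreMass l v = 2 * s) :
    v 0 + v (l + 4) = s ∧ v (l + 2) + v (l + 3) = s ∧ v (l + 5) = 0 ∧ pathMass l v = 0 := by
  have hwrap := hv.wrap
  have hpath : v (l + 2) + v (l + 3) ≤ s := hv.path (l + 2) le_rfl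
  have hdeg := hv.coreMass_add
  simp only [coreMass] at hcore hdeg
  omega

lemma precedes_moveUnit_of_core (hcore : coreMass l v = 2 * s) {a b : ℕ} (hpos : 0 < v b)
    (ha : 1 ≤ a ∧ a ≤ l + 1 ∨ a = l + 5) (hb : b = 0 ∨ b = l + 2 ∨ b = l + 3 ∨ b = l + 4) :
    Precedes l s (moveUnit v a b) v := by
  have hmoved := coreMass_moveUnit_add (l := l) (a := a) hpos
  rw [if_pos hb, if_neg (by omega)] at hmoved
  left
  calc coreRank l s (moveUnit v a b) = 0 := if_pos (by omega)
    _ < coreRank l s v := by grind [coreRank]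

lemma stepsToward_of_lt_last_of_core (hs : 0 < s) (hv : Feasible l s v)
    (hcore : coreMass l v = 2 * s) (hlt : v (l + 5) < u (l + 5)) : StepsToward l s u v := by
  obtain ⟨h₀, h₂, h₅, -⟩ := hv.sums_of_core hcore
  obtain ⟨b, hb, hpos, hb'⟩ : ∃ b, (b = 0 ∨ b = l + 2 ∨ b = l + 3 ∨ b = l + 4) ∧ 0 < v b ∧
      (l + 3 ≤ b ∨ v (l + 3) = 0 ∧ v (l + 4) = 0) := by
    by_cases h₄ : 0 < v (l + 4)
    · exact ⟨l + 4, by omega, h₄, by omega⟩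
    by_cases h₃ : 0 < v (l + 3)
    · exact ⟨l + 3, by omega, h₃, by omega⟩
    exact ⟨0, by omega, by omega, by omega⟩
  exact ⟨l + 5, b, by omega, by omega, hlt, hpos,
    feasible_moveUnit hv (by omega) (by omega) hpos (by omega) (by omega) (by omega),
    precedes_moveUnit_of_core hcore hpos (by omega) hb⟩

lemma stepsToward_of_lt_path_of_core (hs : 0 < s) (hv : Feasible l s v)
    (hcore : coreMass l v = 2 * s) (hend : ¬(l = 0 ∧ v 0 = s ∧ v (l + 2) = s)) {a : ℕ}
    (ha₁ : 1 ≤ a) (ha : a ≤ l + 1) (hlt : v a < u a) : StepsToward l s u v := by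
  obtain ⟨h₀, h₂, -, hpath⟩ := hv.sums_of_core hcore
  have hzero {i : ℕ} (hi₁ : 1 ≤ i) (hi : i ≤ l + 1) : v i = 0 :=
    Nat.eq_zero_of_le_zero (hpath ▸ le_pathMass hi₁ hi)
  obtain ⟨b, hb, hpos, hleft, hright⟩ : ∃ b, (b = 0 ∨ b = l + 2 ∨ b = l + 3 ∨ b = l + 4) ∧
      0 < v b ∧ (a = 1 → b = 0 ∨ v 0 < s) ∧ (a = l + 1 → b = l + 2 ∨ v (l + 2) < s) := by
    by_cases hone : a = 1 ∧ v 0 = s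
    · exact ⟨0, by omega, by omega, by omega, by omega⟩
    by_cases hlast : a = l + 1 ∧ v (l + 2) = s
    · exact ⟨l + 2, by omega, by omega, by omega, by omega⟩
    obtain h | h : 0 < v 0 ∨ 0 < v (l + 4) := by omega
    exacts [⟨0, by omega, h, by omega, by omega⟩, ⟨l + 4, by omega, h, by omega, by omega⟩]
  refine ⟨a, b, by omega, by omega, hlt, hpos, feasible_moveUnit hv (by omega) (by omega) hpos ?_
    (by omega) (by omega), precedes_moveUnit_of_core hcore hpos (by omega) hb⟩
  rintro i - (rfl | rfl)
  · obtain rfl | hi := ha.eq_or_lt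
    · have := hzero ha₁ le_rfl
      change l + 1 = b ∨ l + 2 = b ∨ v (l + 1) + v (l + 2) < s
      omega
    · have := hzero ha₁ ha
      have := hzero (i := i + 1) (by omega) hi
      omega
  · obtain rfl | hi := Nat.eq_zero_or_pos i
    · have : v 1 = 0 := hzero ha₁ ha
      change 0 = b ∨ 1 = b ∨ v 0 + v 1 < s
      omega
    · have := hzero ha₁ ha
      have := hzero hi (by omega)
      omega

lemma stepsToward_of_noncore_pos (hs : 0 < s) (hv : Feasible l s v) (hcore : coreMass l v = 2 * s)
    (hend : u (l + 5) = 0 → ¬(l = 0 ∧ v 0 = s ∧ v (l + 2) = s))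
    (hu : 0 < pathMass l u + u (l + 5)) : StepsToward l s u v := by
  obtain ⟨-, -, h₅, hpath⟩ := hv.sums_of_core hcore
  by_cases hu₅ : 0 < u (l + 5)
  · exact stepsToward_of_lt_last_of_core hs hv hcore (by omega)
  · obtain ⟨a, ha₁, ha, hlt⟩ := exists_lt_of_pathMass_lt (l := l) (u := u) (v := v) (by omega)
    exact stepsToward_of_lt_path_of_core hs hv hcore (hend (by omega)) ha₁ ha hlt

lemma stepsToward_of_lt_add_four_of_core (hv : Feasible l s v) (hcore : coreMass l v = 2 * s)
    (hlt : v (l + 4) < u (l + 4)) (hslack : v (l + 3) + v (l + 4) < s) : StepsToward l s u v := by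
  obtain ⟨h₀, h₂, h₅, -⟩ := hv.sums_of_core hcore
  have hpos : 0 < v 0 := by omega
  refine ⟨l + 4, 0, by omega, by omega, hlt, hpos,
    feasible_moveUnit hv (by omega) (by omega) hpos (by omega) (by omega) (by omega),
    precedes_moveUnit (by omega) (by omega) ?_⟩
  grind [coreRank, moveUnit]

lemma stepsToward_of_lt_add_two_of_core (hv : Feasible l s v) (hcore : coreMass l v = 2 * s)
    (hlt : v (l + 2) < u (l + 2)) (hpos : 0 < v (l + 3)) (hne : ¬(v (l + 3) = 1 ∧ v 0 = s)) :
    StepsToward l s u v := by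
  obtain ⟨h₀, h₂, -, hpath⟩ := hv.sums_of_core hcore
  refine ⟨l + 2, l + 3, by omega, by omega, hlt, hpos,
    feasible_moveUnit hv (by omega) (by omega) hpos ?_ (by omega) (by omega), Or.inl ?_⟩
  · rintro i hi (rfl | hi)
    · omega
    · obtain rfl : i = l + 1 := by omega
      have : v (l + 1) ≤ pathMass l v := le_pathMass (by omega) le_rfl
      change _ ∨ _ ∨ v (l + 1) + v (l + 2) < s
      omega
  · have hmoved := coreMass_moveUnit_add (l := l) (a := l + 2) hpos
    grind [coreRank, moveUnit]

lemma stepsToward_of_pos_add_three_of_top (hs : 0 < s) (hv : Feasible l s v)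
    (hcore : coreMass l v = 2 * s) (h₀ : v 0 = s) (h₂ : v (l + 2) = s) (hu : 0 < u (l + 3)) :
    StepsToward l s u v := by
  obtain ⟨hsum₀, hsum₂, h₅, -⟩ := hv.sums_of_core hcore
  refine ⟨l + 3, l + 2, by omega, by omega, by omega, by omega,
    feasible_moveUnit hv (by omega) (by omega) (by omega) (by omega) (by omega) (by omega),
    Or.inl ?_⟩
  grind [coreRank, moveUnit]

lemma mem_core_of_pos (hpath : pathMass l u = 0) (h₅ : u (l + 5) = 0) {k : ℕ} (hk : k < l + 6)
    (hpos : 0 < u k) : k = 0 ∨ k = l + 2 ∨ k = l + 3 ∨ k = l + 4 := by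
  by_contra! hne
  obtain rfl | hk₅ := eq_or_ne k (l + 5)
  · omega
  · have : u k ≤ pathMass l u := le_pathMass (by omega) (by omega)
    omega

theorem stepsToward_of_core_of_top (hs : 0 < s) (hu : Feasible l s u) (hv : Feasible l s v)
    (hcore : coreMass l v = 2 * s) (h₀ : v 0 = s) (h₂ : v (l + 2) = s) (h : Precedes l s u v) :
    StepsToward l s u v := by
  obtain ⟨hsum₀, hsum₂, h₅, hpath⟩ := hv.sums_of_core hcore
  have hu₀ : u 0 + u 1 ≤ s := hu.path 0 (by omega)
  have hu₂ := hu.path (l + 2) le_rfl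
  have hudeg := hu.coreMass_add
  by_cases hu₄ : 0 < u (l + 4)
  · exact stepsToward_of_lt_add_four_of_core hv hcore (by omega) (by omega)
  by_cases hu₃ : 0 < u (l + 3)
  · exact stepsToward_of_pos_add_three_of_top hs hv hcore h₀ h₂ hu₃
  by_cases hnoncore : 0 < pathMass l u + u (l + 5)
  · refine stepsToward_of_noncore_pos hs hv hcore ?_ hnoncore
    rintro hu₅ ⟨rfl, -⟩
    have hu₁ : u 1 + u 2 ≤ s := hu.path 1 (by omega)
    have hmass : pathMass 0 u = u 1 := by simp [pathMass]
    simp only [coreMass, zero_add] at hudeg hu₃ hu₄ hu₅ hnoncore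
    omega
  exfalso
  simp only [coreMass] at hudeg hcore
  obtain hrank | ⟨-, k, hk, hlt, -⟩ := h
  · grind [coreRank, coreMass]
  · obtain rfl | rfl | rfl | rfl :=
      mem_core_of_pos (l := l) (by omega) (by omega) hk (Nat.zero_lt_of_lt hlt)
    all_goals omega

theorem stepsToward_of_core_of_not_top (hs : 2 ≤ s) (hu : Feasible l s u) (hv : Feasible l s v)
    (hcore : coreMass l v = 2 * s) (htop : ¬(v 0 = s ∧ v (l + 2) = s)) (h : Precedes l s u v) :
    StepsToward l s u v := by
  obtain ⟨h₀, h₂, h₅, hpath⟩ := hv.sums_of_core hcore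
  by_cases hnoncore : 0 < pathMass l u + u (l + 5)
  · exact stepsToward_of_noncore_pos (by omega) hv hcore (fun _ => by omega) hnoncore
  have hucore : coreMass l u = 2 * s := by
    have := hu.coreMass_add
    omega
  obtain ⟨hu₀, hu₂, hu₅, hupath⟩ := hu.sums_of_core hucore
  have hvrank : coreRank l s v = v (l + 3) + 1 := by simp [coreRank, hcore, htop]
  have hutop : ¬(u 0 = s ∧ u (l + 2) = s) := by grind [coreRank, Precedes]
  have hurank : coreRank l s u = u (l + 3) + 1 := by simp [coreRank, hucore, hutop]
  rw [Precedes, hurank, hvrank] at h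
  obtain hrank | ⟨hrank, k, hk, hlt, heq⟩ := h
  · by_cases hlast : v (l + 3) = 1 ∧ v 0 = s
    · exact stepsToward_of_lt_add_four_of_core hv hcore (by omega) (by omega)
    · exact stepsToward_of_lt_add_two_of_core hv hcore (by omega) (by omega) hlast
  · have hlt₄ : v (l + 4) < u (l + 4) := by
      obtain rfl | rfl | rfl | rfl := mem_core_of_pos hupath hu₅ hk (Nat.zero_lt_of_lt hlt)
      · have := heq (l + 4) (by omega) (by omega)
        omega
      all_goals omega
    have hu₃ := hu.triangle
    exact stepsToward_of_lt_add_four_of_core hv hcore hlt₄ (by omega)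

theorem Precedes.stepsToward (h : Precedes l s u v) (hs : 2 ≤ s) (hu : Feasible l s u)
    (hv : Feasible l s v) : StepsToward l s u v := by
  have hle : coreMass l v ≤ 2 * s := by
    have := hv.coreMass_add
    omega
  obtain hcore | hout := hle.eq_or_lt
  · by_cases htop : v 0 = s ∧ v (l + 2) = s
    · exact stepsToward_of_core_of_top (by omega) hu hv hcore htop.1 htop.2 h
    · exact stepsToward_of_core_of_not_top hs hu hv hcore htop h
  · have hvrank : coreRank l s v = 0 := if_pos hout
    obtain hrank | ⟨hrank, k, hk, hlt, heq⟩ := h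
    · omega
    · have huout : coreMass l u < 2 * s := by grind [coreRank]
      exact stepsToward_of_outer hs hu hv huout hout hk hlt heq

end Exchange

section LinearQuotientsOfPowers

variable {l s : ℕ}

/-- The sorting key realising `Precedes` on exponent vectors. -/
def sortKey (l s : ℕ) (d : Fin (l + 6) →₀ ℕ) : ℕ ×ₗ (Colex (Fin (l + 6) → ℕ))ᵒᵈ :=
  toLex (coreRank l s (extendZero d), OrderDual.toDual (toColex d))

lemma sortKey_injective : Function.Injective (sortKey l s) := fun _ _ h =>
  DFunLike.coe_injective (congrArg (fun z => ofColex (OrderDual.ofDual (ofLex z).2)) h)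

lemma sortKey_lt_iff {d e : Fin (l + 6) →₀ ℕ} :
    sortKey l s d < sortKey l s e ↔ Precedes l s (extendZero d) (extendZero e) := by
  rw [sortKey, sortKey, Prod.Lex.toLex_lt_toLex, Precedes]
  refine or_congr_right (and_congr_right fun _ => ?_)
  rw [OrderDual.toDual_lt_toDual]
  constructor
  · rintro ⟨k, heq, hlt⟩
    refine ⟨k, k.isLt, by simpa using hlt, fun j hkj hj => ?_⟩
    simpa [extendZero_of_lt _ hj] using (heq ⟨j, hj⟩ hkj).symm
  · rintro ⟨k, hk, hlt, heq⟩
    refine ⟨⟨k, hk⟩, fun j hkj => ?_, by simpa [extendZero_of_lt _ hk] using hlt⟩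
    simpa using (heq j hkj j.isLt).symm

lemma exists_exchange (hs : 2 ≤ s) {d e : Fin (l + 6) →₀ ℕ} (hd : Feasible l s (extendZero d))
    (he : Feasible l s (extendZero e)) (hlt : sortKey l s d < sortKey l s e) :
    ∃ a, e a < d a ∧ ∃ w, Feasible l s (extendZero w) ∧ sortKey l s w < sortKey l s e ∧
      w ≤ e + Finsupp.single a 1 := by
  obtain ⟨a, b, ha, -, hlt, -, hfeas, hprec⟩ := (sortKey_lt_iff.1 hlt).stepsToward hs hd he
  obtain ⟨w, hw⟩ := exists_extendZero_eq (f := moveUnit (extendZero e) a b) fun i hi => by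
    have hi₀ := extendZero_of_le e hi
    grind [moveUnit]
  refine ⟨⟨a, ha⟩, by simpa only [extendZero_of_lt _ ha] using hlt, w, hw ▸ hfeas,
    sortKey_lt_iff.2 (hw ▸ hprec), fun i => ?_⟩
  have hwi : w i = moveUnit (extendZero e) a b i := by rw [← hw, extendZero_val]
  rw [hwi, moveUnit, extendZero_val, Finsupp.add_apply, Finsupp.single_apply]
  refine (Nat.sub_le _ _).trans_eq ?_
  simp only [Fin.ext_iff, eq_comm]

/-- The graph `H_n` for `n = l + 6`, on the vertices `0, …, l + 5`. -/
def graphH (l : ℕ) : SimpleGraph (Fin (l + 6)) :=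
  (anticycle (l + 6)).deleteEdges
      {s(⟨l + 3, by omega⟩, Fin.last (l + 5)), s(0, ⟨l + 4, by omega⟩)} ⊔
    SimpleGraph.fromEdgeSet {s(0, Fin.last (l + 5))}

lemma graphH_adj {i j : Fin (l + 6)} :
    (graphH l).Adj i j ↔ HEdge l i j ∨ HEdge l j i := by
  have add_one_mod {k : ℕ} (hk : k < l + 6) :
      (k + 1) % (l + 6) = if k = l + 5 then 0 else k + 1 := by
    split_ifs with h
    · rw [h, Nat.mod_self]
    · exact Nat.mod_eq_of_lt (by omega)
  have hi := i.isLt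
  have hj := j.isLt
  simp only [graphH, SimpleGraph.sup_adj, SimpleGraph.deleteEdges_adj,
    SimpleGraph.fromEdgeSet_adj, Set.mem_insert_iff, Set.mem_singleton_iff, Sym2.eq_iff, anticycle,
    HEdge, Fin.ext_iff, Fin.val_zero, Fin.val_last, ne_eq, add_one_mod hi, add_one_mod hj]
  split_ifs <;> omega

lemma edgeIdeal_graphH (K : Type*) [Field K] :
    edgeIdeal K (graphH l) = Ideal.span ((fun d => monomial d (1 : K)) ''
      {e | ∃ i j : Fin (l + 6), HEdge l i j ∧ e = Finsupp.single i 1 + Finsupp.single j 1}) := by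
  rw [edgeIdeal]
  congr 1
  ext p
  constructor
  · rintro ⟨i, j, hij, rfl⟩
    obtain h | h := graphH_adj.1 hij
    · exact ⟨_, ⟨i, j, h, rfl⟩, by simp [X, monomial_mul]⟩
    · exact ⟨_, ⟨j, i, h, rfl⟩, by simp [X, monomial_mul, add_comm]⟩
  · rintro ⟨_, ⟨i, j, h, rfl⟩, rfl⟩
    exact ⟨i, j, graphH_adj.2 (Or.inl h), by simp [X, monomial_mul]⟩

theorem Hn_square_cube_linear_quotients_general (K : Type*) [Field K] (l s : ℕ) (hs : 2 ≤ s) :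
    HasLinearQuotients (edgeIdeal K (graphH l) ^ s) := by
  rw [edgeIdeal_graphH, span_monomial_pow]
  simp only [Set.mem_ofPred_eq, exists_sum_edge_eq_iff_feasible]
  refine hasLinearQuotients_of_exchange (t := 2 * s) (fun d hd => ?_) (sortKey_injective (s := s))
    fun d hd e he => exists_exchange hs hd he
  rw [← sum_range_extendZero, hd.degree]

end LinearQuotientsOfPowers

/-- Lemma `lem-main`: for `n ≥ 6`, the graph `H_n` obtained from the anticycle on `[n]`
by removing the edges `{n-2, n}` and `{1, n-1}` and adding the edge `{1, n}` has
`I_{H_n}^s` with linear quotients for `s = 2, 3`.  (0-indexed: remove `{n-3, n-1}` and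
`{0, n-2}`, add `{0, n-1}`.) -/
theorem Hn_square_cube_linear_quotients
    (K : Type*) [Field K] (n : ℕ) (hn : 6 ≤ n) :
    ∀ s : ℕ, s = 2 ∨ s = 3 →
      HasLinearQuotients
        ((edgeIdeal K
          (((anticycle n).deleteEdges
              {s(⟨n - 3, by omega⟩, ⟨n - 1, by omega⟩), s(⟨0, by omega⟩, ⟨n - 2, by omega⟩)}) ⊔
            SimpleGraph.fromEdgeSet {s(⟨0, by omega⟩, ⟨n - 1, by omega⟩)})) ^ s) := by
  intro s hs
  obtain ⟨l, rfl⟩ : ∃ l, n = l + 6 := Nat.exists_eq_add_of_le' hn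
  exact Hn_square_cube_linear_quotients_general K l s (by omega)

end
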